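/- Let y be a quasi shell solution satisfying in addition 2m(r)/r ≤ 8/9 for all r > 0. There exists ε > 0, depending only on k, ℓ and L₀, such that if the inner radius satisfies R₀ ≤ ε, then every radius r₂ with the properties of Lemma 4.4 (namely R₀ + σ_* < r₂ ≤ R₀ + σ_* + κR₀^{(q+2)/(q+1)}, γ(r₂) = γ_*, and γ(r) ≥ γ_* on [R₀ + σ_*, r₂]) satisfies m(r₂)/r₂ ≥ 2/5. -/

import Mathlib

open MeasureTheory Real Set Filter

/-- The constant `c_ℓ = 2π ∫₀¹ s^ℓ (1-s)^{-1/2} ds`. -/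
noncomputable def cConst (ℓ : ℝ) : ℝ :=
  2 * π * ∫ s in Set.Ioc (0 : ℝ) 1, s ^ ℓ / Real.sqrt (1 - s)

/-- Energy density of the massless Einstein--Vlasov ansatz. -/
noncomputable def rho (k ℓ L0 : ℝ) (y : ℝ → ℝ) (r : ℝ) : ℝ :=
  cConst ℓ * r ^ (2 * ℓ) *
    ∫ ε in Set.Ioc (Real.sqrt L0 / r) (Real.exp (y r)),
      (1 - ε * Real.exp (-(y r))) ^ k * ε ^ 2 * (ε ^ 2 - L0 / r ^ 2) ^ (ℓ + 1 / 2)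

/-- Radial pressure of the massless Einstein--Vlasov ansatz. -/
noncomputable def pres (k ℓ L0 : ℝ) (y : ℝ → ℝ) (r : ℝ) : ℝ :=
  (cConst ℓ / (2 * ℓ + 3)) * r ^ (2 * ℓ) *
    ∫ ε in Set.Ioc (Real.sqrt L0 / r) (Real.exp (y r)),
      (1 - ε * Real.exp (-(y r))) ^ k * (ε ^ 2 - L0 / r ^ 2) ^ (ℓ + 3 / 2)

/-- The Hawking mass `m(r) = 4π ∫₀ʳ s² ϱ(s) ds`. -/
noncomputable def hawkingMass (k ℓ L0 : ℝ) (y : ℝ → ℝ) (r : ℝ) : ℝ :=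
  4 * π * ∫ s in Set.Ioc (0 : ℝ) r, s ^ 2 * rho k ℓ L0 y s

/-- The characteristic function `γ(r) = y(r) - (1/2) ln (L₀ / r²)`. -/
noncomputable def charFn (L0 : ℝ) (y : ℝ → ℝ) (r : ℝ) : ℝ :=
  y r - (1 / 2) * Real.log (L0 / r ^ 2)

/-- The inner radius `R₀ = √L₀ e^{-y(0)}`. -/
noncomputable def innerRadius (L0 : ℝ) (y : ℝ → ℝ) : ℝ :=
  Real.sqrt L0 * Real.exp (-(y 0))

/-- A quasi shell solution of the massless Einstein--Vlasov system. -/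
def QuasiShell (k ℓ L0 : ℝ) (y : ℝ → ℝ) : Prop :=
  ContDiffOn ℝ 1 y (Set.Ici 0) ∧
  ∀ r > 0, 2 * hawkingMass k ℓ L0 y r / r < 1 ∧
    HasDerivAt y
      (-(1 - 2 * hawkingMass k ℓ L0 y r / r)⁻¹ *
        (4 * π * r * pres k ℓ L0 y r + hawkingMass k ℓ L0 y r / r ^ 2)) r

/-- `q = k + ℓ + 3/2`. -/
noncomputable def qExp (k ℓ : ℝ) : ℝ := k + ℓ + 3 / 2

/-- `C_m = max{1, C_u, 4πC_u}`. -/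
noncomputable def Cmax (Cu : ℝ) : ℝ := max 1 (max Cu (4 * π * Cu))

/-- `C₀ = min{1/4, (C_m 8^{1/(q+1)})⁻¹}`. -/
noncomputable def C0c (k ℓ Cu : ℝ) : ℝ :=
  min (1 / 4) (Cmax Cu * 8 ^ (1 / (qExp k ℓ + 1)))⁻¹

/-- `σ_* = C₀ R₀^{1 + (2q+1)/(q(q+1))}`. -/
noncomputable def sigmaStar (k ℓ Cu R0 : ℝ) : ℝ :=
  C0c k ℓ Cu * R0 ^ (1 + (2 * qExp k ℓ + 1) / (qExp k ℓ * (qExp k ℓ + 1)))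

/-- `γ_* = σ_* / (2(R₀ + σ_*))`. -/
noncomputable def gammaStar (k ℓ Cu R0 : ℝ) : ℝ :=
  sigmaStar k ℓ Cu R0 / (2 * (R0 + sigmaStar k ℓ Cu R0))

/-- `κ = 9·2^{2q} / (C_l C₀^q)`. -/
noncomputable def kappaC (k ℓ Cl Cu : ℝ) : ℝ :=
  9 * 2 ^ (2 * qExp k ℓ) / (Cl * C0c k ℓ Cu ^ qExp k ℓ)

/-!
In the scale-free variables `M = m/r`, `w = 4πr²p`, `ϖ = 4πr²ϱ` the field equations form a system
for `r d/dr` which a quasi shell enters at `R₀` with `M = w = 0`. In a thin shell `ϖ` dominates, and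
in that limit `Φ = w/s + (3/2) s + 1/(2s)`, with `s = √(1 - 2M)`, is a first integral. In fact `ϖ`
cancels from `r dΦ/dr` altogether. The upper bound `r dΦ/dr ≤ 1` is unconditional; it gives `Φ ≤ 3`
across the shell, which keeps `s` away from zero and so bounds `r dΦ/dr` from below as well. Hence
`Φ(r₂) = 2 + O((r₂ - R₀)/R₀)`.

At `r₂` the pressure is small, because `γ(r₂) = γ_*` is, so `Φ ≈ 2` says `(3s - 1) (1 - s) ≈ 0`. As
`γ ≥ γ_* = γ(r₂)` to the left of `r₂`, also `γ'(r₂) ≤ 0`, that is `1 - 2M ≤ w + M`, which rules out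
`s ≈ 1`. Therefore `s ≈ 1/3` and `m(r₂)/r₂` is close to Buchdahl's value `4/9`.
-/

section Kernel

variable {k a x x₀ u : ℝ} {n : ℕ}

/-- The integrand of the matter quantities in the scale-free energy variable `u = ε e^{-y}`, at
characteristic value `x = γ`. It is extended by zero off its domain so that the `x`-dependence of
the domain can be handled by dominated convergence on all of `ℝ`. -/
noncomputable def shellKernel (k a : ℝ) (n : ℕ) (x : ℝ) : ℝ → ℝ :=
  (Ioc (exp (-x)) 1).indicator fun u => (1 - u) ^ k * u ^ n * (exp (2 * x) * u ^ 2 - 1) ^ a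

/-- The integral of `shellKernel`; up to explicit factors, density and pressure at `r` are the
values at `γ(r)` of such moments. -/
noncomputable def shellMoment (k a : ℝ) (n : ℕ) (x : ℝ) : ℝ :=
  ∫ u, shellKernel k a n x u

lemma Ioc_exp_neg_subset : Ioc (exp (-x)) 1 ⊆ Ioc 0 1 :=
  Ioc_subset_Ioc_left (exp_pos _).le

lemma exp_two_mul_mul_sq (hu : 0 < u) : exp (2 * x) * u ^ 2 = exp (2 * (x + log u)) := by
  rw [← exp_log (pow_pos hu 2), ← Real.exp_add, Real.log_pow]
  congr 1
  push_cast
  ring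

lemma one_lt_exp_two_mul_mul_sq (hu : u ∈ Ioc (exp (-x)) 1) : 1 < exp (2 * x) * u ^ 2 := by
  have hu0 : 0 < u := (exp_pos _).trans hu.1
  rw [exp_two_mul_mul_sq hu0, Real.one_lt_exp_iff]
  linarith [(lt_log_iff_exp_lt hu0).2 hu.1]

lemma one_sub_rpow_mul_pow_mem_Icc (hk : 0 ≤ k) (hu : u ∈ Ioc (0 : ℝ) 1) :
    (1 - u) ^ k * u ^ n ∈ Icc (0 : ℝ) 1 := by
  have h0 : 0 ≤ 1 - u := sub_nonneg.2 hu.2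
  have h1 : 1 - u ≤ 1 := sub_le_self _ hu.1.le
  exact ⟨mul_nonneg (rpow_nonneg h0 _) (pow_nonneg hu.1.le _),
    mul_le_one₀ (rpow_le_one h0 h1 hk) (pow_nonneg hu.1.le _) (pow_le_one₀ hu.1.le hu.2)⟩

lemma shellKernel_nonneg : 0 ≤ shellKernel k a n x u := by
  refine indicator_nonneg (fun v hv => ?_) u
  have hv0 : 0 < v := (Ioc_exp_neg_subset hv).1
  have h1 : 0 ≤ 1 - v := sub_nonneg.2 hv.2
  have h2 : 0 ≤ exp (2 * x) * v ^ 2 - 1 := sub_nonneg.2 (one_lt_exp_two_mul_mul_sq hv).le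
  positivity

lemma measurable_shellKernel : Measurable (shellKernel k a n x) :=
  Measurable.indicator (by fun_prop) measurableSet_Ioc

lemma shellKernel_le_indicator {X : ℝ} (hk : 0 ≤ k) (ha : 0 ≤ a) (hx : x ≤ X) :
    ‖shellKernel k a n x u‖ ≤ (Ioc (0 : ℝ) 1).indicator (fun _ => exp (2 * X) ^ a) u := by
  rw [Real.norm_of_nonneg shellKernel_nonneg]
  refine indicator_apply_le' (fun hu => ?_) fun _ => indicator_nonneg (fun _ _ => by positivity) u
  have hu01 : u ∈ Ioc (0 : ℝ) 1 := Ioc_exp_neg_subset hu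
  have hbase : 0 ≤ exp (2 * x) * u ^ 2 - 1 := sub_nonneg.2 (one_lt_exp_two_mul_mul_sq hu).le
  have hle : exp (2 * x) * u ^ 2 - 1 ≤ exp (2 * X) :=
    calc exp (2 * x) * u ^ 2 - 1 ≤ exp (2 * x) * u ^ 2 := sub_le_self _ zero_le_one
      _ ≤ exp (2 * x) := mul_le_of_le_one_right (exp_pos _).le (pow_le_one₀ hu01.1.le hu01.2)
      _ ≤ exp (2 * X) := exp_le_exp.2 (by linarith)
  rw [indicator_of_mem hu01]
  calc _ ≤ (exp (2 * x) * u ^ 2 - 1) ^ a :=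
        mul_le_of_le_one_left (rpow_nonneg hbase _) (one_sub_rpow_mul_pow_mem_Icc hk hu01).2
    _ ≤ exp (2 * X) ^ a := rpow_le_rpow hbase hle ha

lemma integrable_indicator_Ioc_const (c : ℝ) :
    Integrable ((Ioc (0 : ℝ) 1).indicator fun _ => c) :=
  (integrable_indicator_iff measurableSet_Ioc).2 (integrableOn_const (by simp))

/-- The excluded `u` is a single point, which dominated convergence may ignore. -/
lemma eventually_mem_Ioc_exp_neg_iff (hu : u ≠ exp (-x₀)) :
    ∀ᶠ x in nhds x₀, u ∈ Ioc (exp (-x)) 1 ↔ u ∈ Ioc (exp (-x₀)) 1 := by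
  have hcont : ContinuousAt (fun x => exp (-x)) x₀ := by fun_prop
  rcases hu.lt_or_gt with h | h
  · filter_upwards [hcont.eventually (lt_mem_nhds h)] with x hx
    simp only [mem_Ioc, hx.not_gt, h.not_gt, false_and]
  · filter_upwards [hcont.eventually (gt_mem_nhds h)] with x hx
    simp only [mem_Ioc, hx, h, true_and]

lemma shellKernel_eventuallyEq_of_mem (hu : u ∈ Ioc (exp (-x₀)) 1) :
    (fun x => shellKernel k a n x u) =ᶠ[nhds x₀]
      fun x => (1 - u) ^ k * u ^ n * (exp (2 * x) * u ^ 2 - 1) ^ a := by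
  filter_upwards [eventually_mem_Ioc_exp_neg_iff hu.1.ne'] with x hx
  exact indicator_of_mem (hx.2 hu) _

lemma shellKernel_eventuallyEq_of_notMem (hu : u ≠ exp (-x₀)) (hu' : u ∉ Ioc (exp (-x₀)) 1) :
    (fun x => shellKernel k a n x u) =ᶠ[nhds x₀] fun _ => 0 := by
  filter_upwards [eventually_mem_Ioc_exp_neg_iff hu] with x hx
  exact indicator_of_notMem (hx.not.2 hu') _

lemma continuous_shellMoment (hk : 0 ≤ k) (ha : 0 ≤ a) : Continuous (shellMoment k a n) := by
  refine continuous_iff_continuousAt.2 fun x₀ => ?_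
  refine continuousAt_of_dominated (.of_forall fun x => measurable_shellKernel.aestronglyMeasurable)
    ?_ (integrable_indicator_Ioc_const (exp (2 * (x₀ + 1)) ^ a)) ?_
  · filter_upwards [gt_mem_nhds (lt_add_one x₀)] with x hx
    exact .of_forall fun u => shellKernel_le_indicator hk ha hx.le
  · filter_upwards [Measure.ae_ne volume (exp (-x₀))] with u hu
    by_cases hmem : u ∈ Ioc (exp (-x₀)) 1
    · refine ContinuousAt.congr ?_ (shellKernel_eventuallyEq_of_mem hmem).symm
      exact continuousAt_const.mul (ContinuousAt.rpow_const (by fun_prop) (Or.inr ha))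
    · exact continuousAt_const.congr (shellKernel_eventuallyEq_of_notMem hu hmem).symm

lemma hasDerivAt_shellKernel (ha : 1 ≤ a) (hu : u ≠ exp (-x₀)) :
    HasDerivAt (fun x => shellKernel k a n x u)
      (2 * a * exp (2 * x₀) * shellKernel k (a - 1) (n + 2) x₀ u) x₀ := by
  by_cases hmem : u ∈ Ioc (exp (-x₀)) 1
  · refine HasDerivAt.congr_of_eventuallyEq ?_ (shellKernel_eventuallyEq_of_mem hmem)
    have hbase :
        HasDerivAt (fun x => exp (2 * x) * u ^ 2 - 1) (exp (2 * x₀) * (2 * 1) * u ^ 2) x₀ :=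
      ((((hasDerivAt_id x₀).const_mul 2).exp).mul_const (u ^ 2)).sub_const 1
    refine ((hbase.rpow_const (p := a) (Or.inr ha)).const_mul ((1 - u) ^ k * u ^ n)).congr_deriv ?_
    rw [shellKernel, indicator_of_mem hmem]
    ring
  · have hzero : shellKernel k (a - 1) (n + 2) x₀ u = 0 := indicator_of_notMem hmem _
    rw [hzero, mul_zero]
    exact (hasDerivAt_const x₀ 0).congr_of_eventuallyEq
      (shellKernel_eventuallyEq_of_notMem hu hmem)

lemma abs_exp_sub_one_rpow_sub_le {X s t : ℝ} (ha : 1 ≤ a) (hs : s ∈ Icc 0 X)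
    (ht : t ∈ Icc 0 X) :
    |(exp (2 * t) - 1) ^ a - (exp (2 * s) - 1) ^ a| ≤ 2 * a * exp (2 * X) ^ a * |t - s| := by
  have hderiv : ∀ v ∈ Icc 0 X, HasDerivWithinAt (fun v => (exp (2 * v) - 1) ^ a)
      (exp (2 * v) * (2 * 1) * a * (exp (2 * v) - 1) ^ (a - 1)) (Icc 0 X) v := fun v _ =>
    (((((hasDerivAt_id v).const_mul 2).exp).sub_const 1).rpow_const (Or.inr ha)).hasDerivWithinAt
  refine (convex_Icc 0 X).norm_image_sub_le_of_norm_hasDerivWithin_le hderiv (fun v hv => ?_) hs ht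
  have hle : exp (2 * v) ≤ exp (2 * X) := exp_le_exp.2 (by linarith [hv.2])
  have hnonneg : 0 ≤ exp (2 * v) - 1 := sub_nonneg.2 (one_le_exp (by linarith [hv.1]))
  rw [Real.norm_of_nonneg (by positivity)]
  calc exp (2 * v) * (2 * 1) * a * (exp (2 * v) - 1) ^ (a - 1)
      ≤ exp (2 * X) * (2 * 1) * a * exp (2 * X) ^ (a - 1) := by
        gcongr
        · linarith
    _ = 2 * a * exp (2 * X) ^ a := by
        rw [rpow_sub_one (exp_pos _).ne']
        field_simp

lemma shellKernel_eq_max (ha : 0 < a) (hu : u ∈ Ioc (0 : ℝ) 1) :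
    shellKernel k a n x u =
      (1 - u) ^ k * u ^ n * (exp (2 * max (x + log u) 0) - 1) ^ a := by
  have hmem : u ∈ Ioc (exp (-x)) 1 ↔ 0 < x + log u := by
    rw [mem_Ioc, and_iff_left hu.2, ← lt_log_iff_exp_lt hu.1, neg_lt_iff_pos_add']
  rcases lt_or_ge 0 (x + log u) with h | h
  · rw [shellKernel, indicator_of_mem (hmem.2 h), max_eq_left h.le, exp_two_mul_mul_sq hu.1]
  · rw [shellKernel, indicator_of_notMem (hmem.not.2 h.not_gt), max_eq_right h]
    simp [ha.ne']

lemma abs_shellKernel_sub_le {X z : ℝ} (hk : 0 ≤ k) (ha : 1 ≤ a) (hX : 0 ≤ X) (hx : x ≤ X)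
    (hz : z ≤ X) :
    |shellKernel k a n x u - shellKernel k a n z u| ≤
      (Ioc (0 : ℝ) 1).indicator (fun _ => 2 * a * exp (2 * X) ^ a) u * |x - z| := by
  by_cases hu : u ∈ Ioc (0 : ℝ) 1
  · have ha0 : 0 < a := one_pos.trans_le ha
    have hclip : ∀ w ≤ X, max (w + log u) 0 ∈ Icc 0 X := fun w hw =>
      ⟨le_max_right _ _, max_le (by linarith [log_nonpos hu.1.le hu.2]) hX⟩
    obtain ⟨hweight0, hweight1⟩ := one_sub_rpow_mul_pow_mem_Icc (n := n) hk hu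
    have hlip : |max (x + log u) 0 - max (z + log u) 0| ≤ |x - z| := by
      simpa using abs_max_sub_max_le_abs (x + log u) (z + log u) 0
    rw [indicator_of_mem hu, shellKernel_eq_max ha0 hu, shellKernel_eq_max ha0 hu, ← mul_sub,
      abs_mul, abs_of_nonneg hweight0]
    calc _ ≤ _ := mul_le_of_le_one_left (abs_nonneg _) hweight1
      _ ≤ _ := abs_exp_sub_one_rpow_sub_le ha (hclip z hz) (hclip x hx)
      _ ≤ _ := by gcongr
  · have hzero : ∀ w, shellKernel k a n w u = 0 := fun w =>
      indicator_of_notMem (fun h => hu (Ioc_exp_neg_subset h)) _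
    simp [hzero, hu]

lemma hasDerivAt_shellMoment (hk : 0 ≤ k) (ha : 1 ≤ a) (x₀ : ℝ) :
    HasDerivAt (shellMoment k a n)
      (2 * a * exp (2 * x₀) * shellMoment k (a - 1) (n + 2) x₀) x₀ := by
  have ha0 : 0 ≤ a := zero_le_one.trans ha
  have hball : ∀ x ∈ Metric.ball x₀ 1, x ≤ |x₀| + 1 := fun x hx => by
    rw [Metric.mem_ball, Real.dist_eq] at hx
    linarith [le_abs_self x₀, (abs_lt.1 hx).2]
  have hmain := hasDerivAt_integral_of_dominated_loc_of_lip (μ := volume)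
    (F := shellKernel k a n)
    (bound := (Ioc (0 : ℝ) 1).indicator fun _ => 2 * a * exp (2 * (|x₀| + 1)) ^ a)
    (Metric.ball_mem_nhds x₀ one_pos)
    (.of_forall fun x => measurable_shellKernel.aestronglyMeasurable)
    ((integrable_indicator_Ioc_const _).mono' measurable_shellKernel.aestronglyMeasurable
      (.of_forall fun u => shellKernel_le_indicator hk ha0 le_rfl))
    (measurable_shellKernel.const_mul (2 * a * exp (2 * x₀))).aestronglyMeasurable
    (.of_forall fun u => ?_) (integrable_indicator_Ioc_const _)
    ((Measure.ae_ne volume (exp (-x₀))).mono fun u hu => hasDerivAt_shellKernel ha hu)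
  · exact hmain.2.congr_deriv (integral_const_mul _ _)
  · refine lipschitzOnWith_iff_norm_sub_le.2 fun x hx z hz => ?_
    rw [Real.coe_nnabs, abs_of_nonneg (indicator_nonneg (fun _ _ => by positivity) u)]
    exact abs_shellKernel_sub_le hk ha (by positivity) (hball x hx) (hball z hz)

lemma shellMoment_nonneg : 0 ≤ shellMoment k a n x :=
  integral_nonneg fun _ => shellKernel_nonneg

lemma shellMoment_of_nonpos (hx : x ≤ 0) : shellMoment k a n x = 0 := by
  have hempty : Ioc (exp (-x)) 1 = ∅ := Ioc_eq_empty (by simpa using hx)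
  simp [shellMoment, shellKernel, hempty]

end Kernel

section Matter

variable {k ℓ L0 : ℝ} {y : ℝ → ℝ} {r : ℝ}

lemma exp_sub_charFn (hL : 0 < L0) (hr : 0 < r) :
    exp (y r - charFn L0 y r) = √L0 / r := by
  have hsqrt : √L0 / r = √(L0 / r ^ 2) := by rw [sqrt_div hL.le, sqrt_sq hr.le]
  rw [hsqrt, ← exp_log (sqrt_pos.2 (div_pos hL (pow_pos hr 2))), log_sqrt (by positivity)]
  congr 1
  rw [charFn]
  ring

lemma exp_two_mul_sub_charFn (hL : 0 < L0) (hr : 0 < r) :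
    exp (2 * (y r - charFn L0 y r)) = L0 / r ^ 2 := by
  rw [two_mul, Real.exp_add, exp_sub_charFn hL hr, div_mul_div_comm, mul_self_sqrt hL.le, sq]

lemma rpow_mul_exp_sub_charFn (hL : 0 < L0) (hr : 0 < r) :
    r ^ (2 * ℓ) * exp ((2 * ℓ + 4) * (y r - charFn L0 y r)) = L0 ^ (ℓ + 2) / r ^ 4 := by
  have hexponent : (2 * ℓ + 4) * (y r - charFn L0 y r) =
      2 * (y r - charFn L0 y r) * (ℓ + 2) := by ring
  have hpow : (r ^ 2) ^ (ℓ + 2) = r ^ (2 * ℓ) * r ^ 4 := by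
    rw [← rpow_natCast_mul hr.le, ← rpow_add_natCast hr.ne']
    congr 1
    push_cast
    ring
  have hne : r ^ (2 * ℓ) ≠ 0 := (rpow_pos_of_pos hr _).ne'
  rw [hexponent, Real.exp_mul, exp_two_mul_sub_charFn hL hr, div_rpow hL.le (sq_nonneg r), hpow]
  field_simp

open scoped Pointwise in
lemma setIntegral_Ioc_mul_left {c : ℝ} (hc : 0 < c) (s t : ℝ) (f : ℝ → ℝ) :
    ∫ ε in Ioc (c * s) (c * t), f ε = c * ∫ u in Ioc s t, f (c * u) := by
  have hdomain : Ioc (c * s) (c * t) = c • Ioc s t := (LinearOrderedField.smul_Ioc hc).symm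
  have hscale := Measure.setIntegral_comp_smul_of_pos volume f (Ioc s t) hc
  simp only [smul_eq_mul, Module.finrank_self, pow_one] at hscale
  rw [hdomain, hscale, mul_inv_cancel_left₀ hc.ne']

lemma ansatz_exp_mul_eq (a : ℝ) (n : ℕ) (hL : 0 < L0) (hr : 0 < r) {u : ℝ}
    (hu : u ∈ Ioc (exp (-charFn L0 y r)) 1) :
    (1 - exp (y r) * u * exp (-(y r))) ^ k * (exp (y r) * u) ^ n *
        ((exp (y r) * u) ^ 2 - L0 / r ^ 2) ^ a =
      exp (n * y r) * exp (2 * (y r - charFn L0 y r) * a) *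
        ((1 - u) ^ k * u ^ n * (exp (2 * charFn L0 y r) * u ^ 2 - 1) ^ a) := by
  have hcancel : exp (y r) * u * exp (-(y r)) = u := by
    rw [mul_right_comm, ← Real.exp_add, add_neg_cancel, Real.exp_zero, one_mul]
  have hfactor : (exp (y r) * u) ^ 2 - L0 / r ^ 2 =
      exp (2 * (y r - charFn L0 y r)) * (exp (2 * charFn L0 y r) * u ^ 2 - 1) := by
    rw [mul_sub, ← mul_assoc, ← Real.exp_add, ← mul_add, sub_add_cancel,
      exp_two_mul_sub_charFn hL hr, mul_pow, ← Real.exp_nat_mul, mul_one, Nat.cast_ofNat]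
  rw [hcancel, hfactor, mul_pow, ← Real.exp_nat_mul, Real.exp_mul (2 * (y r - charFn L0 y r)) a,
    mul_rpow (exp_pos _).le (sub_nonneg.2 (one_lt_exp_two_mul_mul_sq hu).le)]
  ring

/-- The substitution `ε = e^y u`. -/
lemma setIntegral_Ioc_eq_shellMoment (a : ℝ) (n : ℕ) (hL : 0 < L0) (hr : 0 < r) :
    ∫ ε in Ioc (√L0 / r) (exp (y r)),
        (1 - ε * exp (-(y r))) ^ k * ε ^ n * (ε ^ 2 - L0 / r ^ 2) ^ a =
      exp ((2 * a + n + 1) * (y r - charFn L0 y r)) *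
        (exp ((n + 1) * charFn L0 y r) * shellMoment k a n (charFn L0 y r)) := by
  have hdomain : Ioc (√L0 / r) (exp (y r)) =
      Ioc (exp (y r) * exp (-charFn L0 y r)) (exp (y r) * 1) := by
    rw [← Real.exp_add, ← sub_eq_add_neg, exp_sub_charFn hL hr, mul_one]
  have hprefactor : exp (y r) * (exp (n * y r) * exp (2 * (y r - charFn L0 y r) * a)) =
      exp ((2 * a + n + 1) * (y r - charFn L0 y r)) * exp ((n + 1) * charFn L0 y r) := by
    simp only [← Real.exp_add]
    ring_nf
  rw [hdomain, setIntegral_Ioc_mul_left (exp_pos _), setIntegral_congr_fun measurableSet_Ioc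
    fun u hu => ansatz_exp_mul_eq a n hL hr hu, integral_const_mul,
    ← integral_indicator measurableSet_Ioc, ← mul_assoc, hprefactor, mul_assoc]
  rfl

lemma rho_eq_shellMoment (hL : 0 < L0) (hr : 0 < r) :
    rho k ℓ L0 y r = cConst ℓ * (L0 ^ (ℓ + 2) / r ^ 4) *
      (exp (3 * charFn L0 y r) * shellMoment k (ℓ + 1 / 2) 2 (charFn L0 y r)) := by
  rw [rho, setIntegral_Ioc_eq_shellMoment _ _ hL hr, ← rpow_mul_exp_sub_charFn (y := y) hL hr]
  push_cast
  ring_nf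

lemma pres_eq_shellMoment (hL : 0 < L0) (hr : 0 < r) :
    pres k ℓ L0 y r = cConst ℓ / (2 * ℓ + 3) * (L0 ^ (ℓ + 2) / r ^ 4) *
      (exp (charFn L0 y r) * shellMoment k (ℓ + 3 / 2) 0 (charFn L0 y r)) := by
  have hintegral := setIntegral_Ioc_eq_shellMoment (k := k) (y := y) (ℓ + 3 / 2) 0 hL hr
  simp only [pow_zero, mul_one] at hintegral
  rw [pres, hintegral, ← rpow_mul_exp_sub_charFn (y := y) hL hr]
  push_cast
  ring_nf

lemma cConst_nonneg : 0 ≤ cConst ℓ :=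
  mul_nonneg (by positivity) (setIntegral_nonneg measurableSet_Ioc fun _ hs =>
    div_nonneg (rpow_nonneg hs.1.le _) (sqrt_nonneg _))

lemma rho_nonneg (hL : 0 < L0) (hr : 0 < r) : 0 ≤ rho k ℓ L0 y r := by
  rw [rho_eq_shellMoment hL hr]
  have := cConst_nonneg (ℓ := ℓ)
  have := shellMoment_nonneg (k := k) (a := ℓ + 1 / 2) (n := 2) (x := charFn L0 y r)
  positivity

lemma pres_nonneg (hl : -(1 / 2) ≤ ℓ) (hL : 0 < L0) (hr : 0 < r) : 0 ≤ pres k ℓ L0 y r := by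
  rw [pres_eq_shellMoment hL hr]
  have := cConst_nonneg (ℓ := ℓ)
  have := shellMoment_nonneg (k := k) (a := ℓ + 3 / 2) (n := 0) (x := charFn L0 y r)
  have : 0 < 2 * ℓ + 3 := by linarith
  positivity

lemma rho_eq_zero_of_charFn_nonpos (hL : 0 < L0) (hr : 0 < r) (hγ : charFn L0 y r ≤ 0) :
    rho k ℓ L0 y r = 0 := by
  rw [rho_eq_shellMoment hL hr, shellMoment_of_nonpos hγ, mul_zero, mul_zero]

lemma pres_eq_zero_of_charFn_nonpos (hL : 0 < L0) (hr : 0 < r) (hγ : charFn L0 y r ≤ 0) :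
    pres k ℓ L0 y r = 0 := by
  rw [pres_eq_shellMoment hL hr, shellMoment_of_nonpos hγ, mul_zero, mul_zero]

lemma hawkingMass_nonneg (hL : 0 < L0) : 0 ≤ hawkingMass k ℓ L0 y r :=
  mul_nonneg (by positivity) (setIntegral_nonneg measurableSet_Ioc fun s hs =>
    mul_nonneg (sq_nonneg s) (rho_nonneg hL hs.1))

lemma hasDerivAt_pow_four_mul_pres {γ' : ℝ} (hk : 0 ≤ k) (hl : -(1 / 2) ≤ ℓ) (hL : 0 < L0)
    (hr : 0 < r) (hγ : HasDerivAt (charFn L0 y) γ' r) :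
    HasDerivAt (fun r => r ^ 4 * pres k ℓ L0 y r)
      (r ^ 4 * (rho k ℓ L0 y r + pres k ℓ L0 y r) * γ') r := by
  have hmoment : HasDerivAt (shellMoment k (ℓ + 3 / 2) 0) _ (charFn L0 y r) :=
    hasDerivAt_shellMoment hk (by linarith) _
  have hprod := (hγ.exp.mul (hmoment.comp r hγ)).const_mul
    (cConst ℓ / (2 * ℓ + 3) * L0 ^ (ℓ + 2))
  refine (hprod.congr_of_eventuallyEq ?_).congr_deriv ?_
  · filter_upwards [lt_mem_nhds hr] with s hs
    rw [pres_eq_shellMoment hL hs]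
    simp only [Pi.mul_apply, Function.comp_apply]
    field_simp
  · have hne : 2 * ℓ + 3 ≠ 0 := by linarith
    have hexp : exp (3 * charFn L0 y r) = exp (charFn L0 y r) * exp (2 * charFn L0 y r) := by
      rw [← Real.exp_add]
      ring_nf
    have hhalf : ℓ + 3 / 2 - 1 = ℓ + 1 / 2 := by ring
    rw [pres_eq_shellMoment hL hr, rho_eq_shellMoment hL hr, hexp, hhalf, zero_add]
    simp only [Function.comp_apply]
    field_simp
    ring

lemma hasDerivAt_charFn {y' : ℝ} (hL : 0 < L0) (hr : 0 < r) (hy : HasDerivAt y y' r) :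
    HasDerivAt (charFn L0 y) (y' + 1 / r) r := by
  have hlog : HasDerivAt (fun s => y s - (1 / 2) * log L0 + log s) (y' + 1 / r) r := by
    rw [one_div r]
    exact (hy.sub_const _).add (hasDerivAt_log hr.ne')
  refine hlog.congr_of_eventuallyEq ?_
  filter_upwards [lt_mem_nhds hr] with s hs
  rw [charFn, log_div hL.ne' (pow_ne_zero 2 hs.ne'), Real.log_pow]
  push_cast
  ring

lemma continuousOn_rho (hk : 0 ≤ k) (hl : -(1 / 2) ≤ ℓ) (hL : 0 < L0)
    (hγ : ContinuousOn (charFn L0 y) (Ioi 0)) : ContinuousOn (rho k ℓ L0 y) (Ioi 0) := by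
  have hmoment : ContinuousOn
      (fun s => shellMoment k (ℓ + 1 / 2) 2 (charFn L0 y s)) (Ioi 0) :=
    (continuous_shellMoment hk (by linarith)).comp_continuousOn hγ
  have hinv : ContinuousOn (fun s : ℝ => L0 ^ (ℓ + 2) / s ^ 4) (Ioi 0) :=
    continuousOn_const.div (by fun_prop) fun s hs => pow_ne_zero 4 (ne_of_gt hs)
  exact ((continuousOn_const.mul hinv).mul (((continuousOn_const.mul hγ).rexp).mul hmoment)).congr
    fun s hs => rho_eq_shellMoment hL hs

lemma innerRadius_pos (hL : 0 < L0) : 0 < innerRadius L0 y :=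
  mul_pos (sqrt_pos.2 hL) (exp_pos _)

end Matter

lemma hasDerivAt_setIntegral_Ioc_zero {f : ℝ → ℝ} {R r : ℝ} (hR : 0 < R) (hr : 0 < r)
    (hzero : ∀ s ∈ Ioc 0 R, f s = 0) (hf : ContinuousOn f (Ioi 0)) :
    HasDerivAt (fun r => ∫ s in Ioc 0 r, f s) (f r) r := by
  have hinner : IntervalIntegrable f volume 0 R :=
    (intervalIntegrable_iff_integrableOn_Ioc_of_le hR.le).2
      (integrableOn_zero.congr_fun (fun s hs => (hzero s hs).symm) measurableSet_Ioc)
  have houter : IntervalIntegrable f volume R r :=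
    (hf.mono (ordConnected_Ioi.uIcc_subset hR hr)).intervalIntegrable
  refine (intervalIntegral.integral_hasDerivAt_right (hinner.trans houter)
    (hf.stronglyMeasurableAtFilter isOpen_Ioi r hr)
    (hf.continuousAt (Ioi_mem_nhds hr))).congr_of_eventuallyEq ?_
  filter_upwards [lt_mem_nhds hr] with x hx
  rw [intervalIntegral.integral_of_le hx.le]

section QuasiShell

variable {k ℓ L0 : ℝ} {y : ℝ → ℝ} {r : ℝ}

/-- The compactness `M = m(r) / r`. -/
noncomputable def compactness (k ℓ L0 : ℝ) (y : ℝ → ℝ) (r : ℝ) : ℝ :=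
  hawkingMass k ℓ L0 y r / r

/-- The scale-free energy density `ϖ = 4πr²ϱ`. -/
noncomputable def scaledRho (k ℓ L0 : ℝ) (y : ℝ → ℝ) (r : ℝ) : ℝ :=
  4 * π * r ^ 2 * rho k ℓ L0 y r

/-- The scale-free radial pressure `w = 4πr²p`. -/
noncomputable def scaledPres (k ℓ L0 : ℝ) (y : ℝ → ℝ) (r : ℝ) : ℝ :=
  4 * π * r ^ 2 * pres k ℓ L0 y r

lemma compactness_nonneg (hL : 0 < L0) (hr : 0 < r) : 0 ≤ compactness k ℓ L0 y r :=
  div_nonneg (hawkingMass_nonneg hL) hr.le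

lemma scaledPres_nonneg (hl : -(1 / 2) ≤ ℓ) (hL : 0 < L0) (hr : 0 < r) :
    0 ≤ scaledPres k ℓ L0 y r :=
  mul_nonneg (by positivity) (pres_nonneg hl hL hr)

lemma QuasiShell.two_mul_compactness_lt_one (hy : QuasiShell k ℓ L0 y) (hr : 0 < r) :
    2 * compactness k ℓ L0 y r < 1 := by
  simpa only [compactness, mul_div_assoc] using (hy.2 r hr).1

lemma QuasiShell.hasDerivAt (hy : QuasiShell k ℓ L0 y) (hr : 0 < r) :
    HasDerivAt y (-((scaledPres k ℓ L0 y r + compactness k ℓ L0 y r) /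
      (1 - 2 * compactness k ℓ L0 y r)) / r) r := by
  have hpos : 0 < 1 - 2 * compactness k ℓ L0 y r :=
    sub_pos.2 (hy.two_mul_compactness_lt_one hr)
  refine (hy.2 r hr).2.congr_deriv ?_
  rw [mul_div_assoc 2, ← compactness, scaledPres,
    show hawkingMass k ℓ L0 y r = compactness k ℓ L0 y r * r from
      (div_mul_cancel₀ _ hr.ne').symm]
  field_simp

lemma QuasiShell.hasDerivAt_charFn (hL : 0 < L0) (hy : QuasiShell k ℓ L0 y) (hr : 0 < r) :
    HasDerivAt (charFn L0 y) ((1 - (scaledPres k ℓ L0 y r + compactness k ℓ L0 y r) /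
      (1 - 2 * compactness k ℓ L0 y r)) / r) r :=
  (_root_.hasDerivAt_charFn hL hr (hy.hasDerivAt hr)).congr_deriv (by ring)

lemma QuasiShell.antitoneOn (hl : -(1 / 2) ≤ ℓ) (hL : 0 < L0) (hy : QuasiShell k ℓ L0 y) :
    AntitoneOn y (Ici 0) := by
  refine antitoneOn_of_hasDerivWithinAt_nonpos (convex_Ici 0) hy.1.continuousOn
    (fun r hr => (hy.hasDerivAt (interior_Ici.subset hr)).hasDerivWithinAt) fun r hr => ?_
  have hr0 : 0 < r := interior_Ici.subset hr
  have := compactness_nonneg (k := k) (ℓ := ℓ) (y := y) hL hr0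
  have := scaledPres_nonneg (k := k) (y := y) hl hL hr0
  have : 0 < 1 - 2 * compactness k ℓ L0 y r := sub_pos.2 (hy.two_mul_compactness_lt_one hr0)
  exact div_nonpos_of_nonpos_of_nonneg (neg_nonpos.2 (by positivity)) hr0.le

lemma QuasiShell.charFn_nonpos (hl : -(1 / 2) ≤ ℓ) (hL : 0 < L0) (hy : QuasiShell k ℓ L0 y)
    (hr : r ∈ Ioc 0 (innerRadius L0 y)) : charFn L0 y r ≤ 0 := by
  have hanti : y r ≤ y 0 := hy.antitoneOn hl hL self_mem_Ici hr.1.le hr.1.le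
  have hlower : exp (y 0) ≤ √L0 / r := by
    rw [le_div_comm₀ (exp_pos _) hr.1, div_eq_mul_inv, ← Real.exp_neg]
    exact hr.2
  have hle : exp (y r) ≤ exp (y r - charFn L0 y r) :=
    calc exp (y r) ≤ exp (y 0) := exp_le_exp.2 hanti
      _ ≤ √L0 / r := hlower
      _ = exp (y r - charFn L0 y r) := (exp_sub_charFn hL hr.1).symm
  linarith [exp_le_exp.1 hle]

lemma QuasiShell.compactness_innerRadius (hl : -(1 / 2) ≤ ℓ) (hL : 0 < L0)
    (hy : QuasiShell k ℓ L0 y) : compactness k ℓ L0 y (innerRadius L0 y) = 0 := by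
  rw [compactness, hawkingMass, setIntegral_eq_zero_of_forall_eq_zero fun s hs => ?_, mul_zero,
    zero_div]
  rw [rho_eq_zero_of_charFn_nonpos hL hs.1 (hy.charFn_nonpos hl hL hs), mul_zero]

lemma QuasiShell.scaledPres_innerRadius (hl : -(1 / 2) ≤ ℓ) (hL : 0 < L0)
    (hy : QuasiShell k ℓ L0 y) : scaledPres k ℓ L0 y (innerRadius L0 y) = 0 := by
  have hR : 0 < innerRadius L0 y := innerRadius_pos hL
  rw [scaledPres, pres_eq_zero_of_charFn_nonpos hL hR (hy.charFn_nonpos hl hL ⟨hR, le_rfl⟩),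
    mul_zero]

lemma QuasiShell.hasDerivAt_hawkingMass (hk : 0 ≤ k) (hl : -(1 / 2) ≤ ℓ) (hL : 0 < L0)
    (hy : QuasiShell k ℓ L0 y) (hr : 0 < r) :
    HasDerivAt (hawkingMass k ℓ L0 y) (4 * π * (r ^ 2 * rho k ℓ L0 y r)) r := by
  have hγ : ContinuousOn (charFn L0 y) (Ioi 0) := fun s hs =>
    (hy.hasDerivAt_charFn hL hs).continuousAt.continuousWithinAt
  refine (hasDerivAt_setIntegral_Ioc_zero (innerRadius_pos (y := y) hL) hr (fun s hs => ?_)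
    ((continuousOn_id.pow 2).mul (continuousOn_rho hk hl hL hγ))).const_mul (4 * π)
  simp [rho_eq_zero_of_charFn_nonpos hL hs.1 (hy.charFn_nonpos hl hL hs)]

end QuasiShell
section ThinShell

variable {a b δ M w : ℝ}

/-- The Tolman–Oppenheimer–Volkoff system for the compactness `M = m/r`, the scale-free pressure
`w = 4πr²p` and the scale-free density `ϖ = 4πr²ϱ`, in the massless Vlasov closure, on a set `S` of
radii. The sign and horizon conditions are part of the notion. -/
structure IsScaleFreeTOV (M w ϖ : ℝ → ℝ) (S : Set ℝ) : Prop where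
  compactness_nonneg : ∀ r ∈ S, 0 ≤ M r
  pressure_nonneg : ∀ r ∈ S, 0 ≤ w r
  two_mul_compactness_lt_one : ∀ r ∈ S, 2 * M r < 1
  hasDerivAt_compactness : ∀ r ∈ S, HasDerivAt M ((ϖ r - M r) / r) r
  hasDerivAt_pressure : ∀ r ∈ S, HasDerivAt w
    ((-2 * w r + (ϖ r + w r) * (1 - (w r + M r) / (1 - 2 * M r))) / r) r

/-- A first integral of the scale-free TOV system in the limit of dominating density: `ϖ → ∞` with
`ϖ dr/r = dM` leaves the linear equation `dw/dM = 1 - (w + M) / (1 - 2M)`. -/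
noncomputable def thinShellInvariant (M w : ℝ) : ℝ :=
  w / √(1 - 2 * M) + 3 / 2 * √(1 - 2 * M) + 1 / (2 * √(1 - 2 * M))

/-- The derivative of `thinShellInvariant` with respect to `log r` along the scale-free TOV
system. -/
noncomputable def thinShellDrift (M w : ℝ) : ℝ :=
  (M * (1 - 3 * M) - w * (1 + w)) / √(1 - 2 * M) ^ 3

lemma thinShellInvariant_zero_zero : thinShellInvariant 0 0 = 2 := by
  norm_num [thinShellInvariant]

lemma sq_sqrt_one_sub_two_mul (hM : 2 * M < 1) : √(1 - 2 * M) ^ 2 = 1 - 2 * M :=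
  sq_sqrt (sub_pos.2 hM).le

lemma sqrt_one_sub_two_mul_pos (hM : 2 * M < 1) : 0 < √(1 - 2 * M) :=
  sqrt_pos.2 (sub_pos.2 hM)

lemma thinShellDrift_le_one (hM : 2 * M < 1) (hw : 0 ≤ w) : thinShellDrift M w ≤ 1 := by
  have hs : 0 < √(1 - 2 * M) := sqrt_one_sub_two_mul_pos hM
  have hsq := sq_sqrt_one_sub_two_mul hM
  set s := √(1 - 2 * M)
  have hMs : M = (1 - s ^ 2) / 2 := by linarith
  rw [thinShellDrift, div_le_one (by positivity)]
  have hmass : M * (1 - 3 * M) ≤ s ^ 3 := by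
    have hpos : 0 ≤ 3 * s ^ 4 + 4 * (s - 2 / 3) ^ 2 * (s + 1 / 3) := by positivity
    rw [hMs]
    linarith
  have hpressure : 0 ≤ w * (1 + w) := by positivity
  linarith

lemma neg_le_thinShellDrift (hM0 : 0 ≤ M) (hM : 2 * M < 1) (hw : 0 ≤ w)
    (hinv : thinShellInvariant M w ≤ 3) : -500 ≤ thinShellDrift M w := by
  have hs : 0 < √(1 - 2 * M) := sqrt_one_sub_two_mul_pos hM
  have hsq := sq_sqrt_one_sub_two_mul hM
  rw [thinShellInvariant] at hinv
  rw [thinShellDrift, le_div_iff₀ (by positivity)]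
  set s := √(1 - 2 * M)
  have hclear : 2 * w + 3 * s ^ 2 + 1 ≤ 6 * s :=
    calc 2 * w + 3 * s ^ 2 + 1 = 2 * s * (w / s + 3 / 2 * s + 1 / (2 * s)) := by field_simp
      _ ≤ 2 * s * 3 := by gcongr
      _ = 6 * s := by ring
  have hs_lower : 1 / 6 ≤ s := by linarith [sq_nonneg s]
  have hw_upper : w ≤ 1 := by linarith [sq_nonneg (s - 1)]
  have hs_cube : (1 / 6) ^ 3 ≤ s ^ 3 := by gcongr
  have hnumerator : -(9 / 4) ≤ M * (1 - 3 * M) - w * (1 + w) := by nlinarith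
  linarith

/-- With vanishing pressure, `Φ = 2` reads `(3s - 1) (1 - s) = 0` for `s = √(1 - 2M)`; the
hypothesis `hcontract` excludes the root `s = 1`. -/
lemma four_ninths_sub_le_of_thinShellInvariant (hM : 2 * M < 1) (hw0 : 0 ≤ w) (hw : w ≤ δ)
    (hδ : δ ≤ 1 / 25) (hinv : 2 - δ ≤ thinShellInvariant M w)
    (hcontract : 1 - 2 * M ≤ w + M) : 4 / 9 - 2 * δ ≤ M := by
  have hs : 0 < √(1 - 2 * M) := sqrt_one_sub_two_mul_pos hM
  have hsq := sq_sqrt_one_sub_two_mul hM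
  rw [thinShellInvariant] at hinv
  set s := √(1 - 2 * M)
  have hδ0 : 0 ≤ δ := hw0.trans hw
  have hclear : 2 * s * (2 - δ) ≤ 2 * w + 3 * s ^ 2 + 1 :=
    calc 2 * s * (2 - δ) ≤ 2 * s * (w / s + 3 / 2 * s + 1 / (2 * s)) := by gcongr
      _ = 2 * w + 3 * s ^ 2 + 1 := by field_simp
  have hs_upper : s ≤ 3 / 5 := by nlinarith
  have hs_third : 3 * s ≤ 1 + 8 * δ := by
    by_contra! hlt
    have hbound : (3 * s - 1) * (2 / 5) ≤ 2 * δ * (3 / 5) + 2 * w :=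
      calc (3 * s - 1) * (2 / 5) ≤ (3 * s - 1) * (1 - s) := by gcongr <;> linarith
        _ ≤ 2 * δ * s + 2 * w := by linarith
        _ ≤ 2 * δ * (3 / 5) + 2 * w := by gcongr
    linarith
  have hs_sq : (3 * s) ^ 2 ≤ (1 + 8 * δ) ^ 2 := by gcongr
  have hδ_sq : δ * δ ≤ δ * (1 / 25) := by gcongr
  linarith

lemma image_sub_le_mul_sub_of_hasDerivAt_le {f f' : ℝ → ℝ} {C : ℝ} (hab : a ≤ b)
    (hf : ∀ x ∈ Icc a b, HasDerivAt f (f' x) x) (hle : ∀ x ∈ Icc a b, f' x ≤ C) :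
    f b - f a ≤ C * (b - a) :=
  (convex_Icc a b).image_sub_le_mul_sub_of_deriv_le
    (fun x hx => (hf x hx).continuousAt.continuousWithinAt)
    (fun x hx => (hf x (interior_subset hx)).differentiableAt.differentiableWithinAt)
    (fun x hx => (hf x (interior_subset hx)).deriv.trans_le (hle x (interior_subset hx)))
    a (left_mem_Icc.2 hab) b (right_mem_Icc.2 hab) hab

namespace IsScaleFreeTOV

variable {M w ϖ : ℝ → ℝ} {S : Set ℝ}

lemma mono {T : Set ℝ} (h : IsScaleFreeTOV M w ϖ S) (hTS : T ⊆ S) : IsScaleFreeTOV M w ϖ T where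
  compactness_nonneg r hr := h.compactness_nonneg r (hTS hr)
  pressure_nonneg r hr := h.pressure_nonneg r (hTS hr)
  two_mul_compactness_lt_one r hr := h.two_mul_compactness_lt_one r (hTS hr)
  hasDerivAt_compactness r hr := h.hasDerivAt_compactness r (hTS hr)
  hasDerivAt_pressure r hr := h.hasDerivAt_pressure r (hTS hr)

/-- The density `ϖ` drops out: this is why the invariant is almost conserved across thin shells. -/
lemma hasDerivAt_thinShellInvariant {r : ℝ} (h : IsScaleFreeTOV M w ϖ S) (hr : r ∈ S) :
    HasDerivAt (fun r => thinShellInvariant (M r) (w r)) (thinShellDrift (M r) (w r) / r) r := by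
  have hlt := h.two_mul_compactness_lt_one r hr
  have hs : 0 < √(1 - 2 * M r) := sqrt_one_sub_two_mul_pos hlt
  have hsq := sq_sqrt_one_sub_two_mul hlt
  have hsqrt := (((h.hasDerivAt_compactness r hr).const_mul 2).const_sub 1).sqrt
    (sub_pos.2 hlt).ne'
  refine ((((h.hasDerivAt_pressure r hr).div hsqrt hs.ne').add (hsqrt.const_mul (3 / 2))).add
    ((hasDerivAt_const r 1).div (hsqrt.const_mul 2) (by positivity))).congr_deriv ?_
  rw [thinShellDrift]
  set s := √(1 - 2 * M r)
  have hM : M r = (1 - s ^ 2) / 2 := by linarith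
  rw [← hsq, hM]
  rcases eq_or_ne r 0 with rfl | hr0
  · simp
  · field_simp
    ring

lemma thinShellInvariant_le (h : IsScaleFreeTOV M w ϖ (Icc a b)) (ha : 0 < a) (hab : a ≤ b)
    (hMa : M a = 0) (hwa : w a = 0) :
    thinShellInvariant (M b) (w b) ≤ 2 + (b - a) / a := by
  have hstart : thinShellInvariant (M a) (w a) = 2 := by
    rw [hMa, hwa, thinShellInvariant_zero_zero]
  have hmean := image_sub_le_mul_sub_of_hasDerivAt_le (C := 1 / a) hab
    (fun r hr => h.hasDerivAt_thinShellInvariant hr) fun r hr => by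
      have hdrift := thinShellDrift_le_one (h.two_mul_compactness_lt_one r hr)
        (h.pressure_nonneg r hr)
      exact div_le_div₀ zero_le_one hdrift ha hr.1
  rw [hstart, one_div_mul_eq_div] at hmean
  linarith

lemma le_thinShellInvariant (h : IsScaleFreeTOV M w ϖ (Icc a b)) (ha : 0 < a) (hab : a ≤ b)
    (hb : b ≤ 2 * a) (hMa : M a = 0) (hwa : w a = 0) :
    2 - 500 * ((b - a) / a) ≤ thinShellInvariant (M b) (w b) := by
  have hstart : thinShellInvariant (M a) (w a) = 2 := by
    rw [hMa, hwa, thinShellInvariant_zero_zero]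
  have hupper : ∀ r ∈ Icc a b, thinShellInvariant (M r) (w r) ≤ 3 := fun r hr => by
    have hthin : (r - a) / a ≤ 1 := (div_le_one ha).2 (by linarith [hr.2])
    linarith [(h.mono (Icc_subset_Icc_right hr.2)).thinShellInvariant_le ha hr.1 hMa hwa]
  have hmean := image_sub_le_mul_sub_of_hasDerivAt_le (C := 500 / a) hab
    (fun r hr => (h.hasDerivAt_thinShellInvariant hr).neg) fun r hr => by
      have hdrift := neg_le_thinShellDrift (h.compactness_nonneg r hr)
        (h.two_mul_compactness_lt_one r hr) (h.pressure_nonneg r hr) (hupper r hr)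
      rw [← neg_div]
      exact div_le_div₀ (by norm_num) (neg_le.1 hdrift) ha hr.1
  simp only [Pi.neg_apply, hstart] at hmean
  linarith [div_mul_comm (500 : ℝ) a (b - a)]

lemma four_ninths_sub_le (h : IsScaleFreeTOV M w ϖ (Icc a b)) (ha : 0 < a) (hab : a ≤ b)
    (hMa : M a = 0) (hwa : w a = 0) (hδ : δ ≤ 1 / 25) (hthin : 500 * ((b - a) / a) ≤ δ)
    (hwb : w b ≤ δ) (hcontract : 1 - 2 * M b ≤ w b + M b) : 4 / 9 - 2 * δ ≤ M b := by
  have hmem : b ∈ Icc a b := right_mem_Icc.2 hab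
  have hb : b ≤ 2 * a := by
    have hratio : (b - a) / a ≤ 1 := by linarith
    linarith [(div_le_one ha).1 hratio]
  exact four_ninths_sub_le_of_thinShellInvariant (h.two_mul_compactness_lt_one b hmem)
    (h.pressure_nonneg b hmem) hwb hδ
    (by linarith [h.le_thinShellInvariant ha hab hb hMa hwa]) hcontract

end IsScaleFreeTOV

end ThinShell

section Contraction

variable {k ℓ L0 : ℝ} {y : ℝ → ℝ} {r : ℝ}

lemma QuasiShell.hasDerivAt_compactness (hk : 0 ≤ k) (hl : -(1 / 2) ≤ ℓ) (hL : 0 < L0)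
    (hy : QuasiShell k ℓ L0 y) (hr : 0 < r) :
    HasDerivAt (compactness k ℓ L0 y) ((scaledRho k ℓ L0 y r - compactness k ℓ L0 y r) / r) r := by
  refine ((hy.hasDerivAt_hawkingMass hk hl hL hr).div (hasDerivAt_id r) hr.ne').congr_deriv ?_
  simp only [scaledRho, compactness, id_eq]
  field_simp

lemma QuasiShell.hasDerivAt_scaledPres (hk : 0 ≤ k) (hl : -(1 / 2) ≤ ℓ) (hL : 0 < L0)
    (hy : QuasiShell k ℓ L0 y) (hr : 0 < r) :
    HasDerivAt (scaledPres k ℓ L0 y)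
      ((-2 * scaledPres k ℓ L0 y r + (scaledRho k ℓ L0 y r + scaledPres k ℓ L0 y r) *
        (1 - (scaledPres k ℓ L0 y r + compactness k ℓ L0 y r) /
          (1 - 2 * compactness k ℓ L0 y r))) / r) r := by
  have hpow := hasDerivAt_pow_four_mul_pres hk hl hL hr (hy.hasDerivAt_charFn hL hr)
  refine (((hpow.const_mul (4 * π)).div (hasDerivAt_pow 2 r)
    (pow_ne_zero 2 hr.ne')).congr_of_eventuallyEq ?_).congr_deriv ?_
  · filter_upwards [lt_mem_nhds hr] with s hs
    simp only [scaledPres, Pi.div_apply]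
    field_simp
  · set D := 1 - (scaledPres k ℓ L0 y r + compactness k ℓ L0 y r) /
      (1 - 2 * compactness k ℓ L0 y r)
    simp only [scaledRho, scaledPres]
    field_simp
    push_cast
    ring

lemma QuasiShell.isScaleFreeTOV (hk : 0 ≤ k) (hl : -(1 / 2) ≤ ℓ) (hL : 0 < L0)
    (hy : QuasiShell k ℓ L0 y) :
    IsScaleFreeTOV (compactness k ℓ L0 y) (scaledPres k ℓ L0 y) (scaledRho k ℓ L0 y) (Ioi 0) where
  compactness_nonneg _ hr := compactness_nonneg hL hr
  pressure_nonneg _ hr := scaledPres_nonneg hl hL hr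
  two_mul_compactness_lt_one _ hr := hy.two_mul_compactness_lt_one hr
  hasDerivAt_compactness _ hr := hy.hasDerivAt_compactness hk hl hL hr
  hasDerivAt_pressure _ hr := hy.hasDerivAt_scaledPres hk hl hL hr

lemma nonpos_of_hasDerivAt_of_forall_Icc_ge {f : ℝ → ℝ} {f' a b : ℝ} (hf : HasDerivAt f f' b)
    (hab : a < b) (hmin : ∀ x ∈ Icc a b, f b ≤ f x) : f' ≤ 0 := by
  have hslope : Tendsto (slope f b) (nhdsWithin b (Iio b)) (nhds f') :=
    (hasDerivAt_iff_tendsto_slope.1 hf).mono_left (nhdsWithin_mono b fun x hx => ne_of_lt hx)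
  refine le_of_tendsto hslope ?_
  filter_upwards [Ioo_mem_nhdsLT hab] with x hx
  rw [slope_def_field]
  exact div_nonpos_of_nonneg_of_nonpos (sub_nonneg.2 (hmin x (Ioo_subset_Icc_self hx)))
    (sub_nonpos.2 hx.2.le)

lemma QuasiShell.one_sub_le_of_forall_charFn_ge {a b : ℝ} (hL : 0 < L0)
    (hy : QuasiShell k ℓ L0 y) (hab : a < b) (hb : 0 < b)
    (hmin : ∀ r ∈ Icc a b, charFn L0 y b ≤ charFn L0 y r) :
    1 - 2 * compactness k ℓ L0 y b ≤ scaledPres k ℓ L0 y b + compactness k ℓ L0 y b := by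
  have hpos : 0 < 1 - 2 * compactness k ℓ L0 y b :=
    sub_pos.2 (hy.two_mul_compactness_lt_one hb)
  have hderiv := nonpos_of_hasDerivAt_of_forall_Icc_ge (hy.hasDerivAt_charFn hL hb) hab hmin
  rw [div_le_iff₀ hb, zero_mul] at hderiv
  exact (one_le_div hpos).1 (sub_nonpos.1 hderiv)

lemma QuasiShell.four_ninths_sub_le {a b δ : ℝ} (hk : 0 ≤ k) (hl : -(1 / 2) ≤ ℓ) (hL : 0 < L0)
    (hy : QuasiShell k ℓ L0 y) (ha : innerRadius L0 y ≤ a) (hab : a < b)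
    (hmin : ∀ r ∈ Icc a b, charFn L0 y b ≤ charFn L0 y r) (hδ : δ ≤ 1 / 25)
    (hthin : 500 * ((b - innerRadius L0 y) / innerRadius L0 y) ≤ δ)
    (hpressure : scaledPres k ℓ L0 y b ≤ δ) : 4 / 9 - 2 * δ ≤ compactness k ℓ L0 y b := by
  have hR : 0 < innerRadius L0 y := innerRadius_pos hL
  have hRb : innerRadius L0 y ≤ b := ha.trans hab.le
  have htov := (hy.isScaleFreeTOV hk hl hL).mono
    fun r (hr : r ∈ Icc (innerRadius L0 y) b) => hR.trans_le hr.1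
  exact htov.four_ninths_sub_le hR hRb (hy.compactness_innerRadius hl hL)
    (hy.scaledPres_innerRadius hl hL) hδ hthin hpressure
    (hy.one_sub_le_of_forall_charFn_ge hL hab (hR.trans_le hRb) hmin)

end Contraction

section SmallRadius

variable {k ℓ L0 Cu R : ℝ} {y : ℝ → ℝ}

lemma tendsto_rpow_div_self_nhdsGT_zero {p : ℝ} (hp : 1 < p) :
    Tendsto (fun R : ℝ => R ^ p / R) (nhdsWithin 0 (Ioi 0)) (nhds 0) := by
  have hpow : Tendsto (fun R : ℝ => R ^ (p - 1)) (nhdsWithin 0 (Ioi 0)) (nhds 0) :=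
    (tendsto_id.mono_left nhdsWithin_le_nhds).rpow_const_nhds_zero (sub_pos.2 hp)
  refine hpow.congr' ?_
  filter_upwards [self_mem_nhdsWithin] with R hR
  exact rpow_sub_one (ne_of_gt hR) p

lemma qExp_pos (hk : 0 ≤ k) (hl : -(1 / 2) ≤ ℓ) : 0 < qExp k ℓ := by
  rw [qExp]
  linarith

lemma C0c_nonneg : 0 ≤ C0c k ℓ Cu := by
  have hCmax : 0 ≤ Cmax Cu := zero_le_one.trans (le_max_left _ _)
  rw [C0c]
  positivity

lemma sigmaStar_nonneg (hR : 0 ≤ R) : 0 ≤ sigmaStar k ℓ Cu R :=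
  mul_nonneg C0c_nonneg (rpow_nonneg hR _)

lemma gammaStar_nonneg (hR : 0 ≤ R) : 0 ≤ gammaStar k ℓ Cu R :=
  div_nonneg (sigmaStar_nonneg hR) (mul_nonneg zero_le_two (add_nonneg hR (sigmaStar_nonneg hR)))

lemma gammaStar_le_sigmaStar_div (hR : 0 < R) :
    gammaStar k ℓ Cu R ≤ sigmaStar k ℓ Cu R / R := by
  have hσ := sigmaStar_nonneg (k := k) (ℓ := ℓ) (Cu := Cu) hR.le
  exact div_le_div_of_nonneg_left hσ hR (by linarith)

lemma tendsto_sigmaStar_div_self (hk : 0 ≤ k) (hl : -(1 / 2) ≤ ℓ) :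
    Tendsto (fun R => sigmaStar k ℓ Cu R / R) (nhdsWithin 0 (Ioi 0)) (nhds 0) := by
  have hq : 0 < qExp k ℓ := qExp_pos hk hl
  have hpow := (tendsto_rpow_div_self_nhdsGT_zero
    (lt_add_of_pos_right 1 (show 0 < (2 * qExp k ℓ + 1) / (qExp k ℓ * (qExp k ℓ + 1)) by
      positivity))).const_mul (C0c k ℓ Cu)
  simpa only [sigmaStar, mul_div_assoc, mul_zero] using hpow

lemma gammaStar_rpow_div_sq_le (hk : 0 ≤ k) (hl : -(1 / 2) ≤ ℓ) (hR : 0 < R) :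
    gammaStar k ℓ Cu R ^ (qExp k ℓ + 1) / R ^ 2 ≤
      C0c k ℓ Cu ^ (qExp k ℓ + 1) * R ^ (1 / qExp k ℓ) := by
  have hq : 0 < qExp k ℓ := qExp_pos hk hl
  set q := qExp k ℓ
  have hσ : sigmaStar k ℓ Cu R / R = C0c k ℓ Cu * R ^ ((2 * q + 1) / (q * (q + 1))) := by
    rw [sigmaStar, rpow_add hR, rpow_one, mul_left_comm, mul_div_cancel_left₀ _ hR.ne']
  have hexponent : (2 * q + 1) / (q * (q + 1)) * (q + 1) = 1 / q + (2 : ℕ) := by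
    push_cast
    field_simp
    ring
  rw [div_le_iff₀ (by positivity)]
  calc gammaStar k ℓ Cu R ^ (q + 1)
      ≤ (C0c k ℓ Cu * R ^ ((2 * q + 1) / (q * (q + 1)))) ^ (q + 1) :=
        rpow_le_rpow (gammaStar_nonneg hR.le) (hσ ▸ gammaStar_le_sigmaStar_div hR) (by positivity)
    _ = C0c k ℓ Cu ^ (q + 1) * R ^ (1 / q) * R ^ 2 := by
        rw [mul_rpow C0c_nonneg (by positivity), ← rpow_mul hR.le, hexponent,
          rpow_add_natCast hR.ne', mul_assoc]

lemma tendsto_gammaStar_rpow_div_sq (hk : 0 ≤ k) (hl : -(1 / 2) ≤ ℓ) :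
    Tendsto (fun R => gammaStar k ℓ Cu R ^ (qExp k ℓ + 1) / R ^ 2) (nhdsWithin 0 (Ioi 0))
      (nhds 0) := by
  have hpow : Tendsto (fun R : ℝ => R ^ (1 / qExp k ℓ)) (nhdsWithin 0 (Ioi 0)) (nhds 0) :=
    (tendsto_id.mono_left nhdsWithin_le_nhds).rpow_const_nhds_zero
      (one_div_pos.2 (qExp_pos hk hl))
  have hupper := hpow.const_mul (C0c k ℓ Cu ^ (qExp k ℓ + 1))
  rw [mul_zero] at hupper
  refine squeeze_zero' ?_ ?_ hupper <;> filter_upwards [self_mem_nhdsWithin] with R hR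
  · exact div_nonneg (rpow_nonneg (gammaStar_nonneg (le_of_lt hR)) _) (sq_nonneg R)
  · exact gammaStar_rpow_div_sq_le hk hl hR

lemma eventually_thin_and_small_pressure (κ : ℝ) {δ : ℝ} (hk : 0 ≤ k) (hl : -(1 / 2) ≤ ℓ)
    (hδ : 0 < δ) : ∀ᶠ R in nhdsWithin 0 (Ioi 0),
      500 * ((sigmaStar k ℓ Cu R + κ * R ^ ((qExp k ℓ + 2) / (qExp k ℓ + 1))) / R) ≤ δ ∧
        4 * π * Cu * (gammaStar k ℓ Cu R ^ (qExp k ℓ + 1) / R ^ 2) ≤ δ := by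
  have hq : 0 < qExp k ℓ := qExp_pos hk hl
  have hexponent : 1 < (qExp k ℓ + 2) / (qExp k ℓ + 1) := by
    rw [one_lt_div (by positivity)]
    linarith
  have hthickness := ((tendsto_sigmaStar_div_self (Cu := Cu) hk hl).add
    ((tendsto_rpow_div_self_nhdsGT_zero hexponent).const_mul κ)).const_mul 500
  have hpressure := (tendsto_gammaStar_rpow_div_sq (Cu := Cu) hk hl).const_mul (4 * π * Cu)
  simp only [mul_zero, add_zero, ← mul_div_assoc, ← add_div] at hthickness hpressure
  filter_upwards [hthickness.eventually (gt_mem_nhds hδ),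
    hpressure.eventually (gt_mem_nhds hδ)] with R hR hR'
  simp only [← mul_div_assoc]
  exact ⟨hR.le, hR'.le⟩

lemma scaledPres_le_of_pres_le {p r : ℝ} (hCu : 0 ≤ Cu) (hR : 0 < R) (hRr : R ≤ r)
    (hγ : 0 ≤ charFn L0 y r)
    (hpres : pres k ℓ L0 y r ≤ Cu * charFn L0 y r ^ p / r ^ 4) :
    scaledPres k ℓ L0 y r ≤ 4 * π * Cu * (charFn L0 y r ^ p / R ^ 2) := by
  have hr : 0 < r := hR.trans_le hRr
  calc scaledPres k ℓ L0 y r ≤ 4 * π * r ^ 2 * (Cu * charFn L0 y r ^ p / r ^ 4) :=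
        mul_le_mul_of_nonneg_left hpres (by positivity)
    _ = 4 * π * Cu * (charFn L0 y r ^ p / r ^ 2) := by field_simp
    _ ≤ 4 * π * Cu * (charFn L0 y r ^ p / R ^ 2) := by gcongr

end SmallRadius

theorem mass_ratio_at_r2_general (k ℓ L0 Cu κ μ : ℝ)
    (hk : 0 ≤ k) (hl : -(1 / 2) ≤ ℓ) (hL : 0 < L0) (hCu : 0 ≤ Cu) (hμ : μ < 4 / 9) :
    ∃ ε : ℝ, 0 < ε ∧
      ∀ y : ℝ → ℝ, QuasiShell k ℓ L0 y →
        (∀ r, innerRadius L0 y ≤ r → r ≤ 2 * innerRadius L0 y → 0 ≤ charFn L0 y r →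
          pres k ℓ L0 y r ≤ Cu * charFn L0 y r ^ (qExp k ℓ + 1) / r ^ 4) →
        innerRadius L0 y ≤ ε →
        ∀ r2 : ℝ,
          innerRadius L0 y + sigmaStar k ℓ Cu (innerRadius L0 y) < r2 →
          r2 ≤ innerRadius L0 y + sigmaStar k ℓ Cu (innerRadius L0 y) +
              κ * innerRadius L0 y ^ ((qExp k ℓ + 2) / (qExp k ℓ + 1)) →
          charFn L0 y r2 = gammaStar k ℓ Cu (innerRadius L0 y) →
          (∀ r, innerRadius L0 y + sigmaStar k ℓ Cu (innerRadius L0 y) ≤ r → r ≤ r2 →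
            gammaStar k ℓ Cu (innerRadius L0 y) ≤ charFn L0 y r) →
          μ ≤ hawkingMass k ℓ L0 y r2 / r2 := by
  set δ := min (1 / 25) ((4 / 9 - μ) / 2)
  have hδ : 0 < δ := lt_min (by norm_num) (by linarith)
  have hδ_le : δ ≤ 1 / 25 := min_le_left _ _
  obtain ⟨ε, hε, hsmall⟩ := mem_nhdsGT_iff_exists_Ioc_subset.1
    (eventually_thin_and_small_pressure (Cu := Cu) κ hk hl hδ)
  refine ⟨ε, hε, fun y hy hpres hRε r2 hr2 hthick hγ hmin => ?_⟩
  have hR : 0 < innerRadius L0 y := innerRadius_pos hL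
  set R := innerRadius L0 y
  obtain ⟨hthin, hpressure⟩ := hsmall ⟨hR, hRε⟩
  have hRr2 : R ≤ r2 := (le_add_of_nonneg_right (sigmaStar_nonneg hR.le)).trans hr2.le
  have hwidth : 500 * ((r2 - R) / R) ≤ δ := hthin.trans' (by gcongr; linarith)
  have hr2_le : r2 ≤ 2 * R := by
    linarith [(div_le_one hR).1 (show (r2 - R) / R ≤ 1 by linarith)]
  have hγ0 : 0 ≤ charFn L0 y r2 := hγ ▸ gammaStar_nonneg hR.le
  have hw := scaledPres_le_of_pres_le hCu hR hRr2 hγ0 (hpres r2 hRr2 hr2_le hγ0)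
  calc μ ≤ 4 / 9 - 2 * δ := by linarith [min_le_right (1 / 25) ((4 / 9 - μ) / 2)]
    _ ≤ compactness k ℓ L0 y r2 :=
      hy.four_ninths_sub_le hk hl hL (le_add_of_nonneg_right (sigmaStar_nonneg hR.le)) hr2
        (fun r hr => hγ.trans_le (hmin r hr.1 hr.2)) hδ_le hwidth (hw.trans (hγ ▸ hpressure))

/-- At the second crossing radius `r₂` one has `m(r₂)/r₂ ≥ 2/5`,
provided the inner radius is small enough. Here `C_l, C_u` are the constants of
the two-sided matter bounds on `[R₀, 2R₀]`. -/
theorem mass_ratio_at_r2 (k ℓ L0 Cl Cu : ℝ)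
    (hk : 0 ≤ k) (hl : -(1 / 2) ≤ ℓ) (hL : 0 < L0) (hCl : 0 < Cl) (hCu : 0 < Cu) :
    ∃ ε : ℝ, 0 < ε ∧
      ∀ y : ℝ → ℝ, QuasiShell k ℓ L0 y →
        (∀ r > (0 : ℝ), 2 * hawkingMass k ℓ L0 y r / r ≤ 8 / 9) →
        (∀ r, innerRadius L0 y ≤ r → r ≤ 2 * innerRadius L0 y →
          0 ≤ charFn L0 y r →
          Cl * charFn L0 y r ^ qExp k ℓ / r ^ 4 ≤ rho k ℓ L0 y r ∧
          rho k ℓ L0 y r ≤ Cu * charFn L0 y r ^ qExp k ℓ / r ^ 4 ∧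
          Cl * charFn L0 y r ^ (qExp k ℓ + 1) / r ^ 4 ≤ pres k ℓ L0 y r ∧
          pres k ℓ L0 y r ≤ Cu * charFn L0 y r ^ (qExp k ℓ + 1) / r ^ 4) →
        innerRadius L0 y ≤ ε →
        ∀ r2 : ℝ,
          innerRadius L0 y + sigmaStar k ℓ Cu (innerRadius L0 y) < r2 →
          r2 ≤ innerRadius L0 y + sigmaStar k ℓ Cu (innerRadius L0 y) +
              kappaC k ℓ Cl Cu * innerRadius L0 y ^ ((qExp k ℓ + 2) / (qExp k ℓ + 1)) →
          charFn L0 y r2 = gammaStar k ℓ Cu (innerRadius L0 y) →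
          (∀ r, innerRadius L0 y + sigmaStar k ℓ Cu (innerRadius L0 y) ≤ r → r ≤ r2 →
            gammaStar k ℓ Cu (innerRadius L0 y) ≤ charFn L0 y r) →
          2 / 5 ≤ hawkingMass k ℓ L0 y r2 / r2 := by
  obtain ⟨ε, hε, hmain⟩ := mass_ratio_at_r2_general k ℓ L0 Cu (kappaC k ℓ Cl Cu) (2 / 5)
    hk hl hL hCu.le (by norm_num)
  exact ⟨ε, hε, fun y hy _ hmatter =>
    hmain y hy fun r hr hr' hγ => (hmatter r hr hr' hγ).2.2.2⟩
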